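/- arXiv:math/0610384 — 3 statements merged into one kernel-verified Lean document; each statement's English description precedes it below -/
import Mathlib

section
/- For all integers s ≥ 3 and k ≥ 2 and every natural number N there exists a finite simple connected graph G with v(G) ≥ N such that every vertex of G has degree at least 1 and at most s, v(G) ≠ k, and τ_k(G) = (v(G) − k)/(sk − k + 1). -/
/-- `H` is a path with `k` edges (a "k-edge path"), as a subgraph of `G`. -/
def SimpleGraph.Subgraph.IsKEdgePath {V : Type*} {G : SimpleGraph V}
    (H : G.Subgraph) (k : ℕ) : Prop :=
  ∃ (u v : V) (w : G.Walk u v), w.IsPath ∧ w.length = k ∧ H = w.toSubgraph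

/-- `H` is a tree with `k` edges (a "k-edge tree"), as a subgraph of `G`. -/
def SimpleGraph.Subgraph.IsKEdgeTree {V : Type*} {G : SimpleGraph V}
    (H : G.Subgraph) (k : ℕ) : Prop :=
  H.coe.IsTree ∧ H.edgeSet.ncard = k

/-- The maximum number of pairwise vertex-disjoint `k`-edge paths in `G`. -/
noncomputable def SimpleGraph.lambdaK {V : Type*} (G : SimpleGraph V) (k : ℕ) : ℕ :=
  sSup {n | ∃ P : Finset G.Subgraph,
    (∀ H ∈ P, H.IsKEdgePath k) ∧
    (P : Set G.Subgraph).Pairwise (fun H H' => Disjoint H.verts H'.verts) ∧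
    P.card = n}

/-- The maximum number of pairwise vertex-disjoint `k`-edge trees in `G`. -/
noncomputable def SimpleGraph.tauK {V : Type*} (G : SimpleGraph V) (k : ℕ) : ℕ :=
  sSup {n | ∃ P : Finset G.Subgraph,
    (∀ H ∈ P, H.IsKEdgeTree k) ∧
    (P : Set G.Subgraph).Pairwise (fun H H' => Disjoint H.verts H'.verts) ∧
    P.card = n}

/-!
Take `m` hubs and `m * b + 1` paths ("arms") of `k` vertices each, where `b = s - 1`. Hub `i` joins
the end of arm `i * b` to the starts of arms `i * b + 1, …, (i + 1) * b`, which gives a tree of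
maximum degree at most `s` on `k + (s * k - k + 1) * m` vertices. Deleting the hubs leaves only the
arms, which are too small for a `k`-edge tree, so every `k`-edge tree contains a hub and at most `m`
of them are disjoint. Conversely, every hub together with the arm leading to it is a path with `k`
edges, and these `m` paths are disjoint.
-/

namespace TreePacking

open SimpleGraph

section Packings

variable {V W ι : Type*} {G : SimpleGraph V} {G' : SimpleGraph W} {k : ℕ}

theorem isKEdgeTree_iff_ncard_verts {H : G.Subgraph} [Finite H.verts] :
    H.IsKEdgeTree k ↔ H.coe.IsTree ∧ H.verts.ncard = k + 1 := by
  refine and_congr_right fun hH => ?_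
  have hedges : H.edgeSet.ncard = Nat.card H.coe.edgeSet := by
    rw [← H.image_coe_edgeSet_coe,
      Set.ncard_image_of_injective _ (Sym2.map.injective Subtype.val_injective),
      Set.ncard_def, Nat.card_coe_set_eq, Set.ncard_def]
  have hcount := (isTree_iff_connected_and_card.1 hH).2
  rw [Nat.card_coe_set_eq H.verts] at hcount
  omega

theorem isKEdgeTree_map {H : G.Subgraph} (hH : H.IsKEdgeTree k) (f : Copy G G') :
    (H.map f.toHom).IsKEdgeTree k := by
  refine ⟨(f.isoSubgraphMap H).isTree_iff.1 hH.1, ?_⟩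
  rw [Subgraph.edgeSet_map, Set.ncard_image_of_injective _ (Sym2.map.injective f.injective), hH.2]

theorem exists_isKEdgeTree_verts_eq_range (hG : G.Connected)
    (hcard : Nat.card V = k + 1) (f : Copy G G') :
    ∃ H : G'.Subgraph, H.IsKEdgeTree k ∧ H.verts = Set.range f := by
  have : Finite V := Nat.finite_of_card_ne_zero (hcard ▸ k.succ_ne_zero)
  obtain ⟨T, hTG, hT⟩ := hG.exists_isTree_le
  have htop : (⊤ : T.Subgraph).IsKEdgeTree k :=
    isKEdgeTree_iff_ncard_verts.2
      ⟨Subgraph.topIso.isTree_iff.2 hT, by rwa [Subgraph.verts_top, Set.ncard_univ]⟩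
  exact ⟨_, isKEdgeTree_map htop (f.comp (Copy.ofLE T G hTG)), by simp⟩

theorem eq_of_forall_adj_eq {α : Type*} {H : G.Subgraph} (hH : H.Preconnected) {f : V → α}
    (hf : ∀ a b, H.Adj a b → f a = f b) {u v : V} (hu : u ∈ H.verts) (hv : v ∈ H.verts) :
    f u = f v := by
  obtain ⟨w⟩ := hH.coe ⟨u, hu⟩ ⟨v, hv⟩
  suffices ∀ {x y : H.verts}, H.coe.Walk x y → f x = f y from this w
  intro x y w
  induction w with
  | nil => rfl
  | cons hadj _ ih => exact (hf _ _ hadj).trans ih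

theorem exists_mem_verts_of_ncard_fiber_le [Finite V] {α : Type*} {C : Set V} {f : V → α}
    (hf : ∀ a b, G.Adj a b → a ∉ C → b ∉ C → f a = f b)
    (hfiber : ∀ x, {v | v ∉ C ∧ f v = x}.ncard ≤ k) {H : G.Subgraph} (hH : H.IsKEdgeTree k) :
    ∃ c ∈ C, c ∈ H.verts := by
  by_contra! havoid
  have hconn : H.Connected := ⟨hH.1.connected⟩
  obtain ⟨u, hu⟩ := hconn.nonempty
  have hsub : H.verts ⊆ {v | v ∉ C ∧ f v = f u} := fun v hv =>
    ⟨fun hvC => havoid v hvC hv, eq_of_forall_adj_eq hconn.preconnected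
      (fun a b hab => hf a b hab.adj_sub (fun ha => havoid a ha hab.fst_mem)
        (fun hb => havoid b hb hab.snd_mem)) hv hu⟩
  have hcard := (isKEdgeTree_iff_ncard_verts.1 hH).2
  have hle := (Set.ncard_le_ncard hsub).trans (hfiber (f u))
  omega

/-- A family of pairwise vertex-disjoint `k`-edge trees of `G`. Indexed families replace the
finsets of subgraphs in the definition of `SimpleGraph.tauK`. -/
structure IsTreePacking (T : ι → G.Subgraph) (k : ℕ) : Prop where
  isKEdgeTree : ∀ i, (T i).IsKEdgeTree k
  disjoint : Pairwise fun i j => Disjoint (T i).verts (T j).verts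

namespace IsTreePacking

variable {T : ι → G.Subgraph}

theorem eq_of_mem_verts (hT : IsTreePacking T k) {i j : ι} {v : V} (hi : v ∈ (T i).verts)
    (hj : v ∈ (T j).verts) : i = j := by
  by_contra hne
  exact Set.disjoint_left.1 (hT.disjoint hne) hi hj

theorem injective (hT : IsTreePacking T k) : Function.Injective T := by
  intro i j hij
  obtain ⟨v⟩ := (hT.isKEdgeTree i).1.connected.nonempty
  exact hT.eq_of_mem_verts v.2 (hij ▸ v.2)

theorem map (hT : IsTreePacking T k) (f : Copy G G') :
    IsTreePacking (fun i => (T i).map f.toHom) k where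
  isKEdgeTree i := isKEdgeTree_map (hT.isKEdgeTree i) f
  disjoint _ _ hij := (Set.disjoint_image_iff f.injective).2 (hT.disjoint hij)

theorem comp_injective (hT : IsTreePacking T k) {κ : Type*} {g : κ → ι}
    (hg : Function.Injective g) : IsTreePacking (T ∘ g) k where
  isKEdgeTree i := hT.isKEdgeTree (g i)
  disjoint _ _ hij := hT.disjoint (hg.ne hij)

theorem card_le_of_forall_exists_mem {κ : Type*} [Finite κ] (hT : IsTreePacking T k)
    {c : κ → V} (hc : ∀ i, ∃ x, c x ∈ (T i).verts) : Nat.card ι ≤ Nat.card κ := by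
  choose x hx using hc
  refine Nat.card_le_card_of_injective x fun i j hij => hT.eq_of_mem_verts (hx i) ?_
  rw [hij]
  exact hx j

end IsTreePacking

theorem tauK_eq_sSup (G : SimpleGraph V) (k : ℕ) :
    G.tauK k = sSup {n | ∃ T : Fin n → G.Subgraph, IsTreePacking T k} := by
  classical
  refine congrArg sSup (Set.ext fun n => ⟨?_, ?_⟩)
  · rintro ⟨P, htree, hdisj, rfl⟩
    refine ⟨fun i => P.equivFin.symm i, fun i => htree _ (P.equivFin.symm i).2, fun i j hij => ?_⟩
    exact hdisj (P.equivFin.symm i).2 (P.equivFin.symm j).2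
      (Subtype.val_injective.ne (P.equivFin.symm.injective.ne hij))
  · rintro ⟨T, hT⟩
    refine ⟨Finset.univ.image T, by simpa using hT.isKEdgeTree, ?_, ?_⟩
    · rw [Finset.coe_image, Finset.coe_univ, Set.image_univ]
      rintro _ ⟨i, rfl⟩ _ ⟨j, rfl⟩ hne
      exact hT.disjoint (ne_of_apply_ne T hne)
    · rw [Finset.card_image_of_injective _ hT.injective, Finset.card_fin]

theorem tauK_congr (φ : G ≃g G') (k : ℕ) : G.tauK k = G'.tauK k := by
  rw [tauK_eq_sSup, tauK_eq_sSup]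
  exact congrArg sSup (Set.ext fun n =>
    ⟨fun ⟨_, hT⟩ => ⟨_, hT.map φ.toCopy⟩, fun ⟨_, hT⟩ => ⟨_, hT.map φ.symm.toCopy⟩⟩)

theorem tauK_eq_card_of_forall_exists_mem [Finite ι] {T : ι → G.Subgraph}
    (hT : IsTreePacking T k) {c : ι → V}
    (hc : ∀ H : G.Subgraph, H.IsKEdgeTree k → ∃ i, c i ∈ H.verts) : G.tauK k = Nat.card ι := by
  rw [tauK_eq_sSup]
  refine IsGreatest.csSup_eq ⟨?_, ?_⟩
  · exact ⟨_, hT.comp_injective (Finite.equivFin ι).symm.injective⟩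
  · rintro n ⟨S, hS⟩
    simpa using hS.card_le_of_forall_exists_mem fun i => hc _ (hS.isKEdgeTree i)

end Packings

section HubTree

variable {b k m : ℕ}

/-- The vertices of `hubTree b k m`: `Sum.inl i` is the `i`-th hub, and `Sum.inr (j, t)` is the
`t`-th vertex of the `j`-th arm. -/
abbrev HubVertex (b k m : ℕ) : Type := Fin m ⊕ Fin (m * b + 1) × Fin k

/-- The index of the arm containing a given vertex, with the junk value `0` at hubs. -/
def armIndex : HubVertex b k m → Fin (m * b + 1) := Sum.elim 0 Prod.fst

/-- The arm of `hubTree b k m` at whose end hub `i` sits. -/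
def armBelow (b : ℕ) (i : Fin m) : Fin (m * b + 1) :=
  ⟨i * b, Nat.lt_succ_of_le (Nat.mul_le_mul_right b i.2.le)⟩

/-- The arms of `hubTree b k m` that start at hub `i`, as a set of natural numbers. -/
def armsAbove (b i : ℕ) : Set ℕ := Set.Ioc (i * b) ((i + 1) * b)

/-- The parent relation of `hubTree b k m`, which is rooted at the start of arm `0`. -/
def IsParent : HubVertex b k m → HubVertex b k m → Prop
  | .inr (j, t), .inr (j', t') => j = j' ∧ (t : ℕ) + 1 = t'
  | .inr (j, t), .inl i => j = armBelow b i ∧ (t : ℕ) + 1 = k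
  | .inl i, .inr (j, t) => (j : ℕ) ∈ armsAbove b i ∧ (t : ℕ) = 0
  | .inl _, .inl _ => False

theorem not_isParent_self (v : HubVertex b k m) : ¬ IsParent v v := by
  rcases v with i | ⟨j, t⟩
  · exact id
  · exact fun h => Nat.succ_ne_self _ h.2

/-- The tree with `m` hubs and `m * b + 1` arms of `k` vertices each, in which every hub joins
the end of one arm to the starts of `b` further arms. -/
def hubTree (b k m : ℕ) : SimpleGraph (HubVertex b k m) where
  Adj u v := IsParent u v ∨ IsParent v u
  symm := ⟨fun _ _ => Or.symm⟩
  loopless := ⟨fun v h => not_isParent_self v (or_self_iff.1 h)⟩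

theorem natCard_hubVertex (b k m : ℕ) : Nat.card (HubVertex b k m) = k + (b * k + 1) * m := by
  rw [Nat.card_sum, Nat.card_prod]
  simp only [Nat.card_fin]
  ring

theorem armBelow_injective (hb : 0 < b) : Function.Injective (armBelow b : Fin m → _) :=
  fun _ _ h => Fin.ext (Nat.eq_of_mul_eq_mul_right hb (Fin.ext_iff.1 h))

/-- The inclusion of arm `j` into `hubTree b k m`. -/
def armHom (j : Fin (m * b + 1)) : pathGraph k →g hubTree b k m where
  toFun t := .inr (j, t)
  map_rel' h := (pathGraph_adj.1 h).imp (And.intro rfl) (And.intro rfl)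

theorem reachable_arm (j : Fin (m * b + 1)) (t t' : Fin k) :
    (hubTree b k m).Reachable (.inr (j, t)) (.inr (j, t')) :=
  (pathGraph_preconnected k t t').map (armHom j)

theorem reachable_hub_armBelow (i : Fin m) (t : Fin k) :
    (hubTree b k m).Reachable (.inl i) (.inr (armBelow b i, t)) := by
  have hk : k - 1 + 1 = k := Nat.sub_add_cancel (Nat.one_le_of_lt t.2)
  have hadj : (hubTree b k m).Adj (.inl i) (.inr (armBelow b i, ⟨k - 1, by omega⟩)) :=
    .inr ⟨rfl, hk⟩
  exact hadj.reachable.trans (reachable_arm _ _ _)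

theorem exists_mem_armsAbove (hb : 0 < b) {j : Fin (m * b + 1)} (hj : j ≠ 0) :
    ∃ i : Fin m, (j : ℕ) ∈ armsAbove b i := by
  have hpos : 0 < (j : ℕ) := Fin.pos_iff_ne_zero.2 hj
  have hdiv := Nat.div_add_mod' (j - 1 : ℕ) b
  have hmod := Nat.mod_lt (j - 1 : ℕ) hb
  have hlt : (j - 1 : ℕ) / b < m := by
    rw [Nat.div_lt_iff_lt_mul hb]
    omega
  exact ⟨⟨(j - 1 : ℕ) / b, hlt⟩, by constructor <;> simp only [add_one_mul] <;> omega⟩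

theorem reachable_arm_zero (hb : 0 < b) (j : Fin (m * b + 1)) (t : Fin k) :
    (hubTree b k m).Reachable (.inr (j, t)) (.inr (0, t)) := by
  induction h : (j : ℕ) using Nat.strong_induction_on generalizing j with
  | _ n ih =>
    subst h
    by_cases hj : j = 0
    · rw [hj]
    · obtain ⟨i, hi⟩ := exists_mem_armsAbove hb hj
      have hadj : (hubTree b k m).Adj (.inr (j, ⟨0, t.pos⟩)) (.inl i) := .inr ⟨hi, rfl⟩
      exact (reachable_arm j t ⟨0, t.pos⟩).trans <| hadj.reachable.trans <|
        (reachable_hub_armBelow i t).trans (ih _ hi.1 _ rfl)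

theorem hubTree_connected (hb : 0 < b) (hk : 0 < k) : (hubTree b k m).Connected := by
  have hroot : ∀ v, (hubTree b k m).Reachable v (.inr (0, ⟨0, hk⟩)) := by
    rintro (i | ⟨j, t⟩)
    · exact (reachable_hub_armBelow i ⟨0, hk⟩).trans (reachable_arm_zero hb _ _)
    · exact (reachable_arm_zero hb j t).trans (reachable_arm _ _ _)
  have : Nonempty (HubVertex b k m) := ⟨.inr (0, ⟨0, hk⟩)⟩
  exact ⟨fun u v => (hroot u).trans (hroot v).symm⟩

theorem eq_of_mem_armsAbove {i i' j : ℕ} (hi : j ∈ armsAbove b i) (hi' : j ∈ armsAbove b i') :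
    i = i' :=
  le_antisymm
    (Nat.lt_succ_iff.1 (lt_of_mul_lt_mul_right (hi.1.trans_le hi'.2) b.zero_le))
    (Nat.lt_succ_iff.1 (lt_of_mul_lt_mul_right (hi'.1.trans_le hi.2) b.zero_le))

theorem subsingleton_parents (v : HubVertex b k m) : {u | IsParent u v}.Subsingleton := by
  rcases v with i | ⟨j, t⟩
  · rintro (_ | ⟨j, t⟩) ⟨rfl, ht⟩ (_ | ⟨j', t'⟩) ⟨rfl, ht'⟩
    rw [Fin.ext (Nat.succ_injective (ht.trans ht'.symm))]
  · rintro (i | ⟨j, t⟩) ⟨hj, ht⟩ (i' | ⟨j', t'⟩) ⟨hj', ht'⟩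
    · rw [Fin.ext (eq_of_mem_armsAbove hj hj')]
    · omega
    · omega
    · rw [hj, hj', Fin.ext (Nat.succ_injective (ht.trans ht'.symm))]

theorem subsingleton_children_arm (hb : 0 < b) (j : Fin (m * b + 1)) (t : Fin k) :
    {v : HubVertex b k m | IsParent (.inr (j, t)) v}.Subsingleton := by
  rintro (i | ⟨j, t⟩) ⟨hj, ht⟩ (i' | ⟨j', t'⟩) ⟨hj', ht'⟩
  · rw [armBelow_injective hb (hj.symm.trans hj')]
  · omega
  · omega
  · rw [← hj, ← hj', Fin.ext (ht.symm.trans ht')]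

theorem ncard_children_hub_le (i : Fin m) :
    {v : HubVertex b k m | IsParent (.inl i) v}.ncard ≤ b := by
  have hncard : (armsAbove b i).ncard = b := by
    rw [armsAbove, ← Finset.coe_Ioc, Set.ncard_coe_finset, Nat.card_Ioc, add_one_mul,
      Nat.add_sub_cancel_left]
  refine (Set.ncard_le_ncard_of_injOn (fun v => (armIndex v : ℕ)) ?_ ?_
    (Set.finite_Ioc _ _)).trans_eq hncard
  · rintro (_ | ⟨j, t⟩) ⟨hj, -⟩
    exact hj
  · rintro (_ | ⟨j, t⟩) ⟨-, ht⟩ (_ | ⟨j', t'⟩) ⟨-, ht'⟩ hjj'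
    have hj : j = j' := Fin.ext hjj'
    rw [hj, Fin.ext (ht.trans ht'.symm)]

theorem ncard_neighborSet_hubTree_le (hb : 0 < b) (v : HubVertex b k m) :
    ((hubTree b k m).neighborSet v).ncard ≤ b + 1 := by
  have hchildren : {u | IsParent v u}.ncard ≤ b := by
    rcases v with i | ⟨j, t⟩
    · exact ncard_children_hub_le i
    · exact (Set.ncard_le_one_iff_subsingleton.2 (subsingleton_children_arm hb j t)).trans hb
  have hparents := Set.ncard_le_one_iff_subsingleton.2 (subsingleton_parents v)
  exact (Set.ncard_union_le {u | IsParent v u} {u | IsParent u v}).trans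
    (Nat.add_le_add hchildren hparents)

theorem exists_hub_mem_verts {H : (hubTree b k m).Subgraph} (hH : H.IsKEdgeTree k) :
    ∃ i, Sum.inl i ∈ H.verts := by
  have hadj : ∀ u v, (hubTree b k m).Adj u v → u ∉ Set.range Sum.inl → v ∉ Set.range Sum.inl →
      armIndex u = armIndex v := by
    rintro (i | ⟨j, t⟩) (i' | ⟨j', t'⟩) h hu hv
    · exact absurd ⟨i, rfl⟩ hu
    · exact absurd ⟨i, rfl⟩ hu
    · exact absurd ⟨i', rfl⟩ hv
    · exact h.elim And.left fun h => h.1.symm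
  have hfiber : ∀ j, {v : HubVertex b k m | v ∉ Set.range Sum.inl ∧ armIndex v = j}.ncard ≤ k := by
    intro j
    have hsub : {v : HubVertex b k m | v ∉ Set.range Sum.inl ∧ armIndex v = j} ⊆
        Set.range (armHom j) := by
      rintro (i | ⟨j, t⟩) ⟨hv, rfl⟩
      · exact absurd ⟨i, rfl⟩ hv
      · exact ⟨t, rfl⟩
    calc _ ≤ (Set.range (armHom j)).ncard := Set.ncard_le_ncard hsub
      _ ≤ Nat.card (Fin k) := by
        rw [← Set.image_univ, ← Set.ncard_univ]
        exact Set.ncard_image_le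
      _ = k := Nat.card_fin k
  obtain ⟨_, ⟨i, rfl⟩, hi⟩ := exists_mem_verts_of_ncard_fiber_le hadj hfiber hH
  exact ⟨i, hi⟩

/-- The vertices of the path formed by hub `i` and the arm at whose end it sits, the hub being
the last one. -/
def hubPathVertex (b : ℕ) (i : Fin m) : Fin (k + 1) → HubVertex b k m :=
  Fin.lastCases (.inl i) fun t => .inr (armBelow b i, t)

theorem hubPathVertex_last (i : Fin m) : hubPathVertex b i (Fin.last k) = .inl i :=
  Fin.lastCases_last

theorem hubPathVertex_castSucc (i : Fin m) (t : Fin k) :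
    hubPathVertex b i t.castSucc = .inr (armBelow b i, t) :=
  Fin.lastCases_castSucc _

theorem isParent_hubPathVertex (i : Fin m) {t t' : Fin (k + 1)} (h : (t : ℕ) + 1 = t') :
    IsParent (hubPathVertex b i t) (hubPathVertex b i t') := by
  cases t using Fin.lastCases with
  | last => exact absurd (h.trans_lt t'.2) (lt_irrefl (k + 1))
  | cast t =>
    cases t' using Fin.lastCases with
    | last =>
      rw [hubPathVertex_castSucc, hubPathVertex_last]
      exact ⟨rfl, h⟩
    | cast t' =>
      rw [hubPathVertex_castSucc, hubPathVertex_castSucc]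
      exact ⟨rfl, h⟩

theorem hubPathVertex_injective (i : Fin m) :
    Function.Injective (hubPathVertex b i : Fin (k + 1) → HubVertex b k m) := by
  intro t t' h
  cases t using Fin.lastCases <;> cases t' using Fin.lastCases <;>
    simp_all [hubPathVertex_last, hubPathVertex_castSucc]

theorem eq_of_hubPathVertex_eq (hb : 0 < b) {i i' : Fin m} {t t' : Fin (k + 1)}
    (h : hubPathVertex b i t = hubPathVertex b i' t') : i = i' := by
  cases t using Fin.lastCases <;> cases t' using Fin.lastCases <;>
    simp_all [hubPathVertex_last, hubPathVertex_castSucc, (armBelow_injective hb).eq_iff]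

/-- The path through `hubPathVertex b i`, as a copy of the path graph with `k` edges. -/
def hubPath (b k : ℕ) (i : Fin m) : Copy (pathGraph (k + 1)) (hubTree b k m) where
  toHom :=
    { toFun := hubPathVertex b i
      map_rel' := fun h =>
        (pathGraph_adj.1 h).imp (isParent_hubPathVertex i) (isParent_hubPathVertex i) }
  injective' := hubPathVertex_injective i

theorem exists_isTreePacking_hubTree (hb : 0 < b) :
    ∃ T : Fin m → (hubTree b k m).Subgraph, IsTreePacking T k := by
  choose T hT hverts using fun i : Fin m =>
    exists_isKEdgeTree_verts_eq_range (pathGraph_connected k) (Nat.card_fin _) (hubPath b k i)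
  refine ⟨T, hT, fun i i' hne => ?_⟩
  simp only [hverts, Set.disjoint_left]
  rintro _ ⟨t, rfl⟩ ⟨t', h⟩
  exact hne (eq_of_hubPathVertex_eq hb h.symm)

theorem tauK_hubTree (hb : 0 < b) : (hubTree b k m).tauK k = m := by
  obtain ⟨T, hT⟩ := exists_isTreePacking_hubTree (k := k) (m := m) hb
  rw [tauK_eq_card_of_forall_exists_mem hT fun _ => exists_hub_mem_verts, Nat.card_fin]

end HubTree

end TreePacking

open TreePacking in
theorem stmt_16_general (s k : ℕ) (hs : 2 ≤ s) (hk : 1 ≤ k) (N : ℕ) :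
    ∃ (n : ℕ) (G : SimpleGraph (Fin n)),
      N ≤ n ∧ G.Connected ∧
      (∀ v : Fin n, 1 ≤ (G.neighborSet v).ncard ∧ (G.neighborSet v).ncard ≤ s) ∧
      n ≠ k ∧
      (G.tauK k : ℚ) = ((n : ℚ) - k) / (s * k - k + 1) := by
  obtain ⟨b, rfl⟩ : ∃ b, s = b + 1 := ⟨s - 1, by omega⟩
  have hb : 0 < b := by omega
  let m := N + 1
  let n := k + (b * k + 1) * m
  let G : SimpleGraph (Fin n) := (hubTree b k m).overFin
    (Nat.card_eq_fintype_card.symm.trans (natCard_hubVertex b k m))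
  let φ : hubTree b k m ≃g G := SimpleGraph.overFinIso _ _
  have hconn : G.Connected := φ.connected_iff.1 (hubTree_connected hb hk)
  have hmn : k + m ≤ n :=
    Nat.add_le_add_left (Nat.le_mul_of_pos_left m (Nat.succ_pos _)) k
  have : Nontrivial (Fin n) := Fin.nontrivial_iff_two_le.2 (by omega)
  refine ⟨n, G, by omega, hconn, fun v => ⟨?_, ?_⟩, by omega, ?_⟩
  · exact (Set.ncard_pos (Set.toFinite _)).2 (hconn.preconnected.exists_adj_of_nontrivial v)
  · rw [← Nat.card_coe_set_eq, Nat.card_congr (φ.symm.mapNeighborSet v), Nat.card_coe_set_eq]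
    exact ncard_neighborSet_hubTree_le hb (φ.symm v)
  · rw [← tauK_congr φ, tauK_hubTree hb]
    have hden : ((b + 1 : ℕ) : ℚ) * k - k + 1 = b * k + 1 := by push_cast; ring
    rw [hden, eq_div_iff (by positivity)]
    push_cast [n]
    ring

/-- For all `s ≥ 3`, `k ≥ 2` and every `N` there exists a finite simple connected
graph `G` with `v(G) ≥ N`, all vertex degrees between 1 and `s`, `v(G) ≠ k`, and
`τ_k(G) = (v(G) − k)/(sk − k + 1)`. -/
theorem stmt_16 (s k : ℕ) (hs : 3 ≤ s) (hk : 2 ≤ k) (N : ℕ) :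
    ∃ (n : ℕ) (G : SimpleGraph (Fin n)),
      N ≤ n ∧ G.Connected ∧
      (∀ v : Fin n, 1 ≤ (G.neighborSet v).ncard ∧ (G.neighborSet v).ncard ≤ s) ∧
      n ≠ k ∧
      (G.tauK k : ℚ) = ((n : ℚ) - k) / (s * k - k + 1) :=
  stmt_16_general s k (by omega) (by omega) N
end

section
/- Let s ≥ 3 and k ≥ 1 be integers and let T be a finite tree with maximum degree at most s and v(T) ≥ k + 1. Then τ_k(T) ≥ (v(T) − k)/(sk − k + 1). -/
/-!
The bound holds for every connected graph with maximum degree at most `s`. Among the connected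
vertex sets with more than `k` elements whose complement is connected or empty, take a minimal one,
`A`. Let `v ∈ A` have a neighbour outside `A` (any `v ∈ A` if there is nothing outside). Each
component `C` of `A \ {v}` is connected and has a connected complement, because the rest of `A`
hangs together through `v`; so `C` has at most `k` elements by minimality. There are at most `s - 1`
such components, hence `A` has at most `(s - 1) * k + 1` elements. As a connected set with more
than `k` elements, `A` contains a `k`-edge tree; discard `A` and repeat until at most `k` vertices
remain. If `A` is everything, then `v` may have `s` neighbours in `A`, so `A` can be larger by `k`;
but then no vertex remains, so the total is still within the bound.
-/

section SubgraphTrees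

variable {V : Type*} {G : SimpleGraph V} {k : ℕ}

theorem isKEdgeTree_of_coe_isTree {H : G.Subgraph} (hH : H.coe.IsTree)
    (hcard : H.verts.ncard = k + 1) : H.IsKEdgeTree k := by
  have : Finite H.verts := Set.finite_of_ncard_ne_zero (by omega)
  have hedges : Nat.card H.coe.edgeSet + 1 = H.verts.ncard :=
    (SimpleGraph.isTree_iff_connected_and_card.1 hH).2
  refine ⟨hH, ?_⟩
  rw [← H.image_coe_edgeSet_coe,
    Set.ncard_image_of_injective _ (Sym2.map.injective Subtype.val_injective)]
  exact Nat.succ_injective (hedges.trans hcard)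

theorem exists_isKEdgeTree_verts_eq {C : Set V} (hC : (G.induce C).Connected)
    (hcard : C.ncard = k + 1) : ∃ H : G.Subgraph, H.verts = C ∧ H.IsKEdgeTree k := by
  obtain ⟨F, hFG, hF⟩ := hC.exists_isTree_le
  let H : G.Subgraph :=
    { verts := C
      Adj x y := ∃ (hx : x ∈ C) (hy : y ∈ C), F.Adj ⟨x, hx⟩ ⟨y, hy⟩
      adj_sub := fun ⟨_, _, hxy⟩ ↦ hFG hxy
      edge_vert := fun ⟨hx, _, _⟩ ↦ hx
      symm := ⟨fun _ _ ⟨hx, hy, hxy⟩ ↦ ⟨hy, hx, hxy.symm⟩⟩ }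
  have hcoe : H.coe = F := by
    ext ⟨x, hx⟩ ⟨y, hy⟩
    exact ⟨fun ⟨_, _, hxy⟩ ↦ hxy, fun hxy ↦ ⟨hx, hy, hxy⟩⟩
  exact ⟨H, rfl, isKEdgeTree_of_coe_isTree (hcoe ▸ hF) hcard⟩

theorem card_le_tauK_of_pairwise_disjoint [Finite V] {P : Finset G.Subgraph}
    (htree : ∀ H ∈ P, H.IsKEdgeTree k)
    (hdisj : (P : Set G.Subgraph).Pairwise fun H H' ↦ Disjoint H.verts H'.verts) :
    P.card ≤ G.tauK k := by
  have := Fintype.ofFinite G.Subgraph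
  refine le_csSup ⟨Fintype.card G.Subgraph, ?_⟩ ⟨P, htree, hdisj, rfl⟩
  rintro _ ⟨Q, -, -, rfl⟩
  exact Q.card_le_univ

end SubgraphTrees

section ConnectedSets

variable {V : Type*} {G : SimpleGraph V} {S A : Set V} {u v w x : V}

theorem exists_isPath_support_subset (hS : (G.induce S).Preconnected) (hu : u ∈ S) (hx : x ∈ S) :
    ∃ p : G.Walk u x, p.IsPath ∧ ∀ y ∈ p.support, y ∈ S := by
  obtain ⟨p, hp⟩ := hS.exists_isPath ⟨u, hu⟩ ⟨x, hx⟩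
  have hsupport : ∀ y ∈ (p.map (SimpleGraph.Embedding.induce S).toHom).support, y ∈ S := by
    rw [SimpleGraph.Walk.support_map]
    exact List.forall_mem_map.2 fun z _ ↦ z.2
  exact ⟨_, hp.map Subtype.val_injective, hsupport⟩

theorem connected_induce_of_forall_exists_walk (hu : u ∈ S)
    (hwalk : ∀ x ∈ S, ∃ p : G.Walk u x, ∀ y ∈ p.support, y ∈ S) : (G.induce S).Connected := by
  refine SimpleGraph.induce_connected_of_patches u hu fun {x} hx ↦ ?_
  obtain ⟨p, hp⟩ := hwalk x hx
  exact ⟨{y | y ∈ p.support}, hp, p.start_mem_support, p.end_mem_support,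
    p.connected_induce_support.preconnected _ _⟩

theorem exists_adj_mem_sdiff (hS : (G.induce S).Preconnected) (hA : A.Nonempty) (hAS : A ⊂ S) :
    ∃ v ∈ A, ∃ w ∈ S \ A, G.Adj v w := by
  obtain ⟨a, ha⟩ := hA
  obtain ⟨b, hbS, hbA⟩ := Set.exists_of_ssubset hAS
  obtain ⟨p, -, hp⟩ := exists_isPath_support_subset hS (hAS.1 ha) hbS
  obtain ⟨d, hd, hfst, hsnd⟩ := p.exists_boundary_dart A ha hbA
  exact ⟨d.fst, hfst, d.snd, ⟨hp _ (p.dart_snd_mem_support_of_mem_darts hd), hsnd⟩, d.adj⟩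

theorem exists_connected_subset_card_eq {S : Finset V} (hS : (G.induce (S : Set V)).Preconnected)
    {n : ℕ} (hn : n + 1 ≤ S.card) :
    ∃ C ⊆ S, (G.induce (C : Set V)).Connected ∧ C.card = n + 1 := by
  classical
  induction n with
  | zero =>
    obtain ⟨x, hx⟩ := Finset.card_pos.1 hn
    refine ⟨{x}, Finset.singleton_subset_iff.2 hx, ?_, Finset.card_singleton x⟩
    rw [Finset.coe_singleton]
    exact SimpleGraph.Connected.of_subsingleton
  | succ n ih =>
    obtain ⟨C, hCS, hC, hcard⟩ := ih (by omega)
    have hssub : C ⊂ S := hCS.ssubset_of_ne (by rintro rfl; omega)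
    have hne : (C : Set V).Nonempty := Finset.card_pos.1 (by omega)
    obtain ⟨v, hv, w, ⟨hwS, hwC⟩, hvw⟩ :=
      exists_adj_mem_sdiff hS hne (Finset.coe_ssubset.2 hssub)
    refine ⟨insert w C, Finset.insert_subset hwS hCS, ?_, ?_⟩
    · rw [Finset.coe_insert, Set.insert_eq, Set.union_comm]
      exact SimpleGraph.connected_induce_union hC.preconnected
        SimpleGraph.Preconnected.of_subsingleton hv (Set.mem_singleton w) hvw
    · rw [Finset.card_insert_of_notMem hwC, hcard]

/-- The vertex set of the component of `u` in the subgraph of `G` induced on `A`, described by walks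
of `G` so that it is a set of vertices of `G`; it is empty when `u ∉ A`. -/
def componentIn (G : SimpleGraph V) (A : Set V) (u : V) : Set V :=
  {x | ∃ p : G.Walk u x, ∀ y ∈ p.support, y ∈ A}

theorem componentIn_subset : componentIn G A u ⊆ A :=
  fun x ⟨p, hp⟩ ↦ hp x p.end_mem_support

theorem mem_componentIn_self (hu : u ∈ A) : u ∈ componentIn G A u :=
  ⟨.nil, by simpa using hu⟩

theorem mem_componentIn_of_walk (hw : w ∈ componentIn G A u) (p : G.Walk w x)
    (hp : ∀ y ∈ p.support, y ∈ A) : x ∈ componentIn G A u := by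
  obtain ⟨q, hq⟩ := hw
  refine ⟨q.append p, fun y hy ↦ ?_⟩
  exact (SimpleGraph.Walk.mem_support_append_iff q p).1 hy |>.elim (hq y) (hp y)

theorem connected_induce_componentIn (hu : u ∈ A) : (G.induce (componentIn G A u)).Connected := by
  classical
  refine connected_induce_of_forall_exists_walk (mem_componentIn_self hu) ?_
  rintro x ⟨p, hp⟩
  exact ⟨p, fun y hy ↦ ⟨p.takeUntil y hy,
    fun z hz ↦ hp z (p.support_takeUntil_subset_support hy hz)⟩⟩

theorem exists_adj_walk_support_subset_sdiff (hA : (G.induce A).Preconnected) (hv : v ∈ A)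
    (hx : x ∈ A \ {v}) :
    ∃ w, G.Adj v w ∧ ∃ q : G.Walk w x, ∀ y ∈ q.support, y ∈ A \ {v} := by
  obtain ⟨p, hpath, hp⟩ := exists_isPath_support_subset hA hv hx.1
  cases p with
  | nil => exact absurd rfl hx.2
  | cons hvw q =>
    rw [SimpleGraph.Walk.cons_isPath_iff] at hpath
    refine ⟨_, hvw, q, fun y hy ↦ ⟨hp y (List.mem_cons_of_mem _ hy), ?_⟩⟩
    rintro rfl
    exact hpath.2 hy

theorem connected_induce_sdiff_componentIn (hA : (G.induce A).Preconnected) (hv : v ∈ A) (u : V) :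
    (G.induce (A \ componentIn G (A \ {v}) u)).Connected := by
  classical
  have hvC : v ∈ A \ componentIn G (A \ {v}) u := ⟨hv, fun h ↦ (componentIn_subset h).2 rfl⟩
  refine connected_induce_of_forall_exists_walk hvC fun x ⟨hxA, hxC⟩ ↦ ?_
  by_cases hxv : x = v
  · subst hxv
    exact ⟨.nil, by simpa using hvC⟩
  obtain ⟨w, hvw, q, hq⟩ := exists_adj_walk_support_subset_sdiff hA hv ⟨hxA, hxv⟩
  refine ⟨.cons hvw q, fun y hy ↦ ?_⟩
  obtain rfl | hyq : y = v ∨ y ∈ q.support := by simpa using hy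
  · exact hvC
  · exact ⟨(hq y hyq).1, fun hyC ↦ hxC <| mem_componentIn_of_walk hyC (q.dropUntil y hyq)
      fun z hz ↦ hq z (q.support_dropUntil_subset_support hyq hz)⟩

end ConnectedSets

section Removable

variable {V : Type*} {G : SimpleGraph V} {S A : Set V} {u v : V}

/-- `A` is a connected part of `S` whose removal leaves `S \ A` connected or empty. In a tree these
are the branches obtained by cutting an edge, together with `S` itself. -/
structure IsRemovable (G : SimpleGraph V) (S A : Set V) : Prop where
  subset : A ⊆ S
  connected : (G.induce A).Connected
  preconnected_sdiff : (G.induce (S \ A)).Preconnected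

/-- `v` is a vertex through which `A` is attached to the rest of `S`; every vertex qualifies if
there is no rest. -/
def IsAttachment (G : SimpleGraph V) (S A : Set V) (v : V) : Prop :=
  S ⊆ A ∨ ∃ w ∈ S \ A, G.Adj v w

theorem exists_isAttachment (hS : (G.induce S).Preconnected) (hA : IsRemovable G S A) :
    ∃ v ∈ A, IsAttachment G S A v := by
  have hne : A.Nonempty := Set.nonempty_coe_sort.1 hA.connected.nonempty
  by_cases hSA : S ⊆ A
  · exact hne.imp fun v hv ↦ ⟨hv, .inl hSA⟩
  · obtain ⟨v, hv, hw⟩ := exists_adj_mem_sdiff hS hne ⟨hA.subset, hSA⟩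
    exact ⟨v, hv, .inr hw⟩

theorem isRemovable_componentIn (hA : IsRemovable G S A) (hv : v ∈ A)
    (hatt : IsAttachment G S A v) (hu : u ∈ A \ {v}) :
    IsRemovable G S (componentIn G (A \ {v}) u) := by
  have hCA : componentIn G (A \ {v}) u ⊆ A := componentIn_subset.trans Set.sdiff_subset
  have hrest := connected_induce_sdiff_componentIn hA.connected.preconnected hv u
  refine ⟨hCA.trans hA.subset, connected_induce_componentIn hu, ?_⟩
  obtain hSA | ⟨w, hw, hvw⟩ := hatt
  · rw [hSA.antisymm hA.subset]
    exact hrest.preconnected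
  · rw [← Set.sdiff_union_sdiff_cancel hA.subset hCA]
    exact (SimpleGraph.connected_induce_union hA.preconnected_sdiff hrest.preconnected hw
      ⟨hv, fun h ↦ (componentIn_subset h).2 rfl⟩ hvw.symm).preconnected

end Removable

section Counting

variable {V : Type*} {G : SimpleGraph V} {S A : Finset V} {v : V} {k s : ℕ}

theorem card_le_of_minimal_isRemovable [DecidableRel G.Adj]
    (hmin : Minimal (fun B : Finset V ↦ IsRemovable G (S : Set V) B ∧ k < B.card) A) (hv : v ∈ A)
    (hatt : IsAttachment G (S : Set V) A v) : A.card ≤ (A.filter (G.Adj v)).card * k + 1 := by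
  classical
  let component (u : V) : Finset V := A.filter (· ∈ componentIn G (A \ {v}) u)
  have coe_component (u : V) : (component u : Set V) = componentIn G (A \ {v}) u := by
    rw [Finset.coe_filter]
    exact Set.inter_eq_right.2 (componentIn_subset.trans Set.sdiff_subset)
  have card_component_le : ∀ u ∈ A.filter (G.Adj v), (component u).card ≤ k := by
    intro u hu
    obtain ⟨huA, hvu⟩ := Finset.mem_filter.1 hu
    by_contra! hlarge
    have hrem : IsRemovable G (S : Set V) (component u) := by
      rw [coe_component]
      exact isRemovable_componentIn hmin.prop.1 hv hatt ⟨huA, hvu.ne'⟩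
    have hvC : v ∈ component u := hmin.le_of_le ⟨hrem, hlarge⟩ (A.filter_subset _) hv
    exact (componentIn_subset (Finset.mem_filter.1 hvC).2).2 rfl
  have hcover : A ⊆ insert v ((A.filter (G.Adj v)).biUnion component) := by
    intro x hx
    by_cases hxv : x = v
    · exact hxv ▸ Finset.mem_insert_self _ _
    obtain ⟨u, hvu, q, hq⟩ := exists_adj_walk_support_subset_sdiff
      hmin.prop.1.connected.preconnected (Finset.mem_coe.2 hv) ⟨hx, hxv⟩
    refine Finset.mem_insert_of_mem (Finset.mem_biUnion.2 ⟨u, ?_, ?_⟩)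
    · exact Finset.mem_filter.2 ⟨(hq u q.start_mem_support).1, hvu⟩
    · exact Finset.mem_filter.2 ⟨hx, q, hq⟩
  calc A.card ≤ ((A.filter (G.Adj v)).biUnion component).card + 1 :=
        (Finset.card_le_card hcover).trans (Finset.card_insert_le _ _)
    _ ≤ (A.filter (G.Adj v)).card * k + 1 :=
        Nat.add_le_add_right (Finset.card_biUnion_le_card_mul _ _ k card_component_le) 1

theorem card_filter_adj_le_degree [DecidableRel G.Adj] [Fintype (G.neighborSet v)] (A : Finset V) :
    (A.filter (G.Adj v)).card ≤ G.degree v :=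
  Finset.card_le_card fun _ hu ↦ (G.mem_neighborFinset v _).2 (Finset.mem_filter.1 hu).2

theorem card_filter_adj_lt_degree [DecidableRel G.Adj] [Fintype (G.neighborSet v)] {w : V}
    (hvw : G.Adj v w) (hw : w ∉ A) : (A.filter (G.Adj v)).card < G.degree v := by
  refine Finset.card_lt_card ((Finset.ssubset_iff_of_subset fun u hu ↦ ?_).2 ⟨w, ?_, ?_⟩)
  · exact (G.mem_neighborFinset v u).2 (Finset.mem_filter.1 hu).2
  · exact (G.mem_neighborFinset v w).2 hvw
  · exact fun h ↦ hw (Finset.mem_filter.1 h).1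

theorem exists_isRemovable_card_le [G.LocallyFinite] (hdeg : ∀ v, G.degree v ≤ s)
    (hS : (G.induce (S : Set V)).Preconnected) (hk : k < S.card) :
    ∃ A : Finset V, IsRemovable G (S : Set V) A ∧ k < A.card ∧
      (A.card ≤ (s - 1) * k + 1 ∨ S.card ≤ (s - 1) * k + 1 + k) := by
  classical
  have hSS : IsRemovable G (S : Set V) S := by
    have : Nonempty (S : Set V) := (Finset.card_pos.1 (by omega : 0 < S.card)).to_subtype
    refine ⟨subset_rfl, ⟨hS⟩, ?_⟩
    rw [Set.sdiff_self]
    exact SimpleGraph.Preconnected.of_subsingleton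
  obtain ⟨A, -, hmin⟩ := exists_minimal_le_of_wellFoundedLT
    (fun B : Finset V ↦ IsRemovable G (S : Set V) B ∧ k < B.card) S ⟨hSS, hk⟩
  obtain ⟨v, hv, hatt⟩ := exists_isAttachment hS hmin.prop.1
  have hcard := card_le_of_minimal_isRemovable hmin hv hatt
  refine ⟨A, hmin.prop.1, hmin.prop.2, ?_⟩
  obtain hSA | ⟨w, hw, hvw⟩ := hatt
  · right
    calc S.card ≤ A.card := Finset.card_le_card (Finset.coe_subset.1 hSA)
      _ ≤ s * k + 1 := hcard.trans (by grw [card_filter_adj_le_degree A, hdeg v])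
      _ ≤ (s - 1 + 1) * k + 1 := by gcongr; omega
      _ = (s - 1) * k + 1 + k := by ring
  · left
    have hlt := (card_filter_adj_lt_degree hvw hw.2).trans_le (hdeg v)
    exact hcard.trans (by gcongr; omega)

end Counting

section Packing

variable {V : Type*} {G : SimpleGraph V} {n k s : ℕ} {S A C : Finset V} {P : Finset (Finset V)}

/-- `P` consists of disjoint connected `n`-element subsets of `S`. Taking spanning trees, such a
family with `n = k + 1` is the same as a family of vertex-disjoint `k`-edge trees inside `S`. -/
structure IsConnectedPacking (G : SimpleGraph V) (n : ℕ) (S : Finset V) (P : Finset (Finset V)) :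
    Prop where
  subset : ∀ C ∈ P, C ⊆ S
  connected : ∀ C ∈ P, (G.induce (C : Set V)).Connected
  card_eq : ∀ C ∈ P, C.card = n
  pairwiseDisjoint : (P : Set (Finset V)).PairwiseDisjoint id

theorem isConnectedPacking_empty : IsConnectedPacking G n S ∅ := by
  constructor <;> simp

theorem IsConnectedPacking.notMem_of_sdiff [DecidableEq V] (hP : IsConnectedPacking G n (S \ A) P)
    (hC : (G.induce (C : Set V)).Connected) (hCA : C ⊆ A) : C ∉ P := by
  intro hCP
  obtain ⟨x, hx⟩ := hC.nonempty
  exact (Finset.mem_sdiff.1 (hP.subset C hCP hx)).2 (hCA hx)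

theorem IsConnectedPacking.insert_of_sdiff [DecidableEq V] (hP : IsConnectedPacking G n (S \ A) P)
    (hAS : A ⊆ S) (hC : (G.induce (C : Set V)).Connected) (hCA : C ⊆ A) (hcard : C.card = n) :
    IsConnectedPacking G n S (insert C P) where
  subset := Finset.forall_mem_insert _ _ _ |>.2
    ⟨hCA.trans hAS, fun D hD ↦ (hP.subset D hD).trans Finset.sdiff_subset⟩
  connected := Finset.forall_mem_insert _ _ _ |>.2 ⟨hC, hP.connected⟩
  card_eq := Finset.forall_mem_insert _ _ _ |>.2 ⟨hcard, hP.card_eq⟩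
  pairwiseDisjoint := by
    rw [Finset.coe_insert]
    exact hP.pairwiseDisjoint.insert fun D hD _ ↦
      Finset.disjoint_sdiff.mono hCA (hP.subset D hD)

theorem IsConnectedPacking.card_le_tauK [Finite V] (hP : IsConnectedPacking G (k + 1) S P) :
    P.card ≤ G.tauK k := by
  classical
  have htrees : ∀ C ∈ P, ∃ H : G.Subgraph, H.verts = C ∧ H.IsKEdgeTree k := fun C hC ↦
    exists_isKEdgeTree_verts_eq (hP.connected C hC) (by rw [Set.ncard_coe_finset, hP.card_eq C hC])
  choose! tree hverts htree using htrees
  have hinj : Set.InjOn tree P := fun C hC D hD hCD ↦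
    Finset.coe_injective ((hverts C hC).symm.trans (hCD ▸ hverts D hD))
  rw [← Finset.card_image_of_injOn hinj]
  refine card_le_tauK_of_pairwise_disjoint (Finset.forall_mem_image.2 htree) ?_
  rw [Finset.coe_image, hinj.pairwise_image]
  intro C hC D hD hCD
  rw [Function.onFun, hverts C hC, hverts D hD]
  exact Finset.disjoint_coe.2 (hP.pairwiseDisjoint hC hD hCD)

theorem exists_isConnectedPacking_card_le [G.LocallyFinite] (hdeg : ∀ v, G.degree v ≤ s) (k : ℕ)
    (S : Finset V) (hS : (G.induce (S : Set V)).Preconnected) :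
    ∃ P, IsConnectedPacking G (k + 1) S P ∧ S.card ≤ P.card * ((s - 1) * k + 1) + k := by
  classical
  induction S using Finset.strongInduction with
  | H S ih =>
    obtain hsmall | hlarge := le_or_gt S.card k
    · exact ⟨∅, isConnectedPacking_empty, by simpa using hsmall⟩
    obtain ⟨A, hA, hkA, hbound⟩ := exists_isRemovable_card_le hdeg hS hlarge
    obtain ⟨C, hCA, hC, hcard⟩ := exists_connected_subset_card_eq hA.connected.preconnected hkA
    have hAS : A ⊆ S := Finset.coe_subset.1 hA.subset
    have hAne : A.Nonempty := Finset.card_pos.1 (by omega)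
    obtain ⟨P, hP, hPcard⟩ := ih (S \ A) (Finset.sdiff_ssubset hAS hAne)
      (by rw [Finset.coe_sdiff]; exact hA.preconnected_sdiff)
    refine ⟨insert C P, hP.insert_of_sdiff hAS hC hCA hcard, ?_⟩
    rw [Finset.card_insert_of_notMem (hP.notMem_of_sdiff hC hCA), add_one_mul]
    have := Finset.card_sdiff_add_card_eq_card hAS
    omega

end Packing

theorem card_le_tauK_mul_add {V : Type*} [Fintype V] {s : ℕ} (k : ℕ) {G : SimpleGraph V}
    [DecidableRel G.Adj] (hG : G.Connected) (hdeg : ∀ v, G.degree v ≤ s) :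
    Fintype.card V ≤ G.tauK k * ((s - 1) * k + 1) + k := by
  have huniv : (G.induce ((Finset.univ : Finset V) : Set V)).Preconnected := by
    rw [Finset.coe_univ]
    exact (SimpleGraph.induceUnivIso G).connected_iff.2 hG |>.preconnected
  obtain ⟨P, hP, hcard⟩ := exists_isConnectedPacking_card_le hdeg k Finset.univ huniv
  rw [Finset.card_univ] at hcard
  exact hcard.trans (by grw [hP.card_le_tauK])

theorem stmt_17_general {V : Type*} [Fintype V] (s k : ℕ) (hs : 1 ≤ s) (G : SimpleGraph V)
    [DecidableRel G.Adj] (hG : G.Connected) (hdeg : ∀ v : V, G.degree v ≤ s) :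
    (G.tauK k : ℚ) ≥ ((Fintype.card V : ℚ) - k) / (s * k - k + 1) := by
  obtain ⟨m, rfl⟩ := Nat.exists_eq_add_of_le' hs
  have hden : ((m + 1 : ℕ) : ℚ) * k - k + 1 = m * k + 1 := by push_cast; ring
  rw [ge_iff_le, hden, div_le_iff₀ (by positivity), sub_le_iff_le_add]
  exact_mod_cast card_le_tauK_mul_add k hG hdeg

/-- Let `s ≥ 3` and `k ≥ 1` and let `T` be a finite tree with maximum degree at
most `s` and `v(T) ≥ k + 1`.  Then `τ_k(T) ≥ (v(T) − k)/(sk − k + 1)`. -/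
theorem stmt_17 {V : Type} [Fintype V] (s k : ℕ) (hs : 3 ≤ s) (hk : 1 ≤ k)
    (T : SimpleGraph V) [DecidableRel T.Adj] (hT : T.IsTree)
    (hdeg : ∀ v : V, T.degree v ≤ s) (hcard : k + 1 ≤ Fintype.card V) :
    (T.tauK k : ℚ) ≥ ((Fintype.card V : ℚ) - k) / (s * k - k + 1) :=
  stmt_17_general s k (by omega) T hT.connected hdeg
end

section
/- Let k ≥ 1 be an integer and let D be a finite simple connected graph whose number of edges equals its number of vertices (equivalently, D is a spanning tree together with one extra edge). Let D_k be the graph obtained from D by subdividing every edge with exactly k new vertices. Then λ_k(D_k) ≥ v(D). -/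
/-- `G'` is obtained from `G` by subdividing each edge `e` of `G` with exactly `f e`
new vertices; `ι` is the embedding of the original (branch) vertices into `G'`.
Each edge `uv` of `G` is replaced by a path `P h` of length `f s(u,v) + 1` from `ι u`
to `ι v`, whose internal vertices are new, these paths are internally disjoint,
they cover all vertices of `G'`, and their edges are exactly the edges of `G'`. -/
def SimpleGraph.IsSubdivision {V V' : Type*} (G : SimpleGraph V) (G' : SimpleGraph V')
    (ι : V → V') (f : Sym2 V → ℕ) : Prop :=
  Function.Injective ι ∧
  ∃ P : ∀ ⦃u v : V⦄, G.Adj u v → G'.Walk (ι u) (ι v),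
    (∀ ⦃u v⦄ (h : G.Adj u v), (P h).IsPath) ∧
    (∀ ⦃u v⦄ (h : G.Adj u v), (P h).length = f s(u, v) + 1) ∧
    (∀ ⦃u v⦄ (h : G.Adj u v), P h.symm = (P h).reverse) ∧
    (∀ ⦃u v⦄ (h : G.Adj u v), ∀ z ∈ (P h).support, z ∈ Set.range ι → z = ι u ∨ z = ι v) ∧
    (∀ x : V', x ∈ Set.range ι ∨ ∃ (u v : V) (h : G.Adj u v), x ∈ (P h).support) ∧
    (∀ ⦃u v u' v' : V⦄ (h : G.Adj u v) (h' : G.Adj u' v'), s(u, v) ≠ s(u', v') →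
      ∀ z : V', z ∈ (P h).support → z ∈ (P h').support → z ∈ Set.range ι) ∧
    (∀ e : Sym2 V', e ∈ G'.edgeSet ↔ ∃ (u v : V) (h : G.Adj u v), e ∈ (P h).edges)

/-!
Orient a spanning tree of `D` towards an endpoint `a` of an edge `ab` outside the tree: every
vertex other than `a` takes the tree edge towards its parent, and `a` takes `ab`. Thus every vertex
is the source of a dart, and distinct vertices get distinct edges. Each dart yields the first `k`
edges of the path that replaces it, which stop short of the far branch vertex. Two such paths
could only meet in a branch vertex, but the only branch vertex on each is its own source.
-/

open SimpleGraph

section Orientation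

variable {V : Type*} {G : SimpleGraph V}

theorem exists_adj_dist_lt_of_connected (hG : G.Connected) {v r : V} (hv : v ≠ r) :
    ∃ w, G.Adj v w ∧ G.dist w r < G.dist v r := by
  obtain ⟨p, hp⟩ := hG.exists_walk_length_eq_dist v r
  cases p with
  | nil => exact absurd rfl hv
  | cons hadj q =>
    have := dist_le q
    rw [Walk.length_cons] at hp
    exact ⟨_, hadj, by omega⟩

theorem exists_injOn_incident_edge_of_connected (hG : G.Connected) (r : V) :
    ∃ parent : V → V, (∀ v ≠ r, G.Adj v (parent v)) ∧
      Set.InjOn (fun v => s(v, parent v)) {r}ᶜ := by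
  choose! parent hadj hdist using fun v (hv : v ≠ r) => exists_adj_dist_lt_of_connected hG hv
  refine ⟨parent, hadj, fun v hv w hw hvw => ?_⟩
  rcases Sym2.eq_iff.1 hvw with ⟨h, -⟩ | ⟨hv_eq, hw_eq⟩
  · exact h
  · -- The two vertices would be each other's parent, hence each strictly closer to `r`.
    have hwv : G.dist w r < G.dist v r := hw_eq ▸ hdist v hv
    exact absurd (hv_eq ▸ hdist w hw) hwv.asymm

theorem exists_isTree_le_and_adj_not_adj [Finite V] (hG : G.Connected)
    (hcard : Nat.card V ≤ G.edgeSet.ncard) :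
    ∃ T ≤ G, T.IsTree ∧ ∃ a b, G.Adj a b ∧ ¬ T.Adj a b := by
  obtain ⟨T, hTG, hT⟩ := hG.exists_isTree_le
  have hTcard : T.edgeSet.ncard + 1 = Nat.card V := (isTree_iff_connected_and_card.1 hT).2
  obtain ⟨⟨a, b⟩, hab, hab_not_adj⟩ := Set.exists_mem_notMem_of_ncard_lt_ncard
    (show T.edgeSet.ncard < G.edgeSet.ncard by omega)
  exact ⟨T, hTG, hT, a, b, hab, hab_not_adj⟩

theorem exists_injective_incident_edge [Finite V] (hG : G.Connected)
    (hcard : Nat.card V ≤ G.edgeSet.ncard) :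
    ∃ next : V → V, (∀ v, G.Adj v (next v)) ∧ Function.Injective fun v => s(v, next v) := by
  classical
  obtain ⟨T, hTG, hT, a, b, hab, hab_not_adj⟩ := exists_isTree_le_and_adj_not_adj hG hcard
  obtain ⟨parent, hparent, hinj⟩ := exists_injOn_incident_edge_of_connected hT.connected a
  have hne : ∀ v ≠ a, s(v, parent v) ≠ s(a, b) := fun v hv h =>
    hab_not_adj ((adj_congr_of_sym2 T h).1 (hparent v hv))
  refine ⟨Function.update parent a b, fun v => ?_, fun v w hvw => ?_⟩
  · rcases eq_or_ne v a with rfl | hv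
    · simpa using hab
    · simpa [hv] using hTG (hparent v hv)
  · by_cases hv : v = a <;> by_cases hw : w = a
    · rw [hv, hw]
    · exact absurd (by simpa [hv, hw] using hvw.symm) (hne w hw)
    · exact absurd (by simpa [hv, hw] using hvw) (hne v hv)
    · exact hinj hv hw (by simpa [hv, hw] using hvw)

end Orientation

section Packing

variable {V : Type*} {G : SimpleGraph V} {k : ℕ}

theorem end_notMem_support_take {u v : V} {p : G.Walk u v} (hp : p.IsPath) (hk : k < p.length) :
    v ∉ (p.take k).support := by
  intro hv
  obtain ⟨i, hi, -⟩ := Walk.mem_support_iff_exists_getVert.1 hv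
  rw [Walk.take_getVert, hp.getVert_eq_end_iff (by omega)] at hi
  omega

theorem verts_nonempty_of_isKEdgePath {H : G.Subgraph} (hH : H.IsKEdgePath k) :
    H.verts.Nonempty := by
  obtain ⟨u, -, p, -, -, rfl⟩ := hH
  exact ⟨u, p.start_mem_verts_toSubgraph⟩

theorem card_le_lambdaK [Finite V] {α : Type*} {H : α → G.Subgraph}
    (hpath : ∀ i, (H i).IsKEdgePath k)
    (hdisj : Pairwise fun i j => Disjoint (H i).verts (H j).verts) :
    Nat.card α ≤ G.lambdaK k := by
  have hinj : Function.Injective H := fun i j hij => by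
    by_contra hne
    have hself : Disjoint (H i).verts (H i).verts := by simpa only [← hij] using hdisj hne
    exact (verts_nonempty_of_isKEdgePath (hpath i)).ne_empty (disjoint_self.1 hself)
  have := Fintype.ofFinite G.Subgraph
  refine le_csSup ⟨Fintype.card G.Subgraph, ?_⟩ ⟨(Set.range H).toFinite.toFinset, ?_, ?_, ?_⟩
  · rintro _ ⟨P, -, -, rfl⟩
    exact P.card_le_univ
  · simpa using hpath
  · rw [Set.Finite.coe_toFinset]
    rintro _ ⟨i, rfl⟩ _ ⟨j, rfl⟩ hij
    exact hdisj (ne_of_apply_ne H hij)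
  · rw [← Set.ncard_eq_toFinset_card, Set.ncard_range_of_injective hinj]

end Packing

section Subdivision

variable {V V' : Type*} {D : SimpleGraph V} {D' : SimpleGraph V'} {ι : V → V'} {f : Sym2 V → ℕ}
  {k : ℕ}

theorem exists_disjoint_kEdgePaths_of_darts (hsub : D.IsSubdivision D' ι f)
    (hf : ∀ e ∈ D.edgeSet, k ≤ f e) :
    ∃ H : D.Dart → D'.Subgraph, (∀ d, (H d).IsKEdgePath k) ∧
      ∀ d d', d.fst ≠ d'.fst → d.edge ≠ d'.edge → Disjoint (H d).verts (H d').verts := by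
  obtain ⟨hι, P, hpath, hlen, -, hbranch, -, hinter, -⟩ := hsub
  have hk (d : D.Dart) : k < (P d.adj).length := by
    rw [hlen]
    exact Nat.lt_succ_of_le (hf _ d.adj)
  have hmem {d : D.Dart} {z : V'} (hz : z ∈ ((P d.adj).take k).support) :
      z ∈ (P d.adj).support :=
    ((P d.adj).isSubwalk_take k).support_subset hz
  have hsource {d : D.Dart} {z : V'} (hz : z ∈ ((P d.adj).take k).support)
      (hzι : z ∈ Set.range ι) : z = ι d.fst :=
    (hbranch d.adj z (hmem hz) hzι).resolve_right
      (ne_of_mem_of_not_mem hz (end_notMem_support_take (hpath d.adj) (hk d)))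
  refine ⟨fun d => ((P d.adj).take k).toSubgraph, fun d => ?_, fun d d' hfst hedge => ?_⟩
  · exact ⟨_, _, _, (hpath d.adj).take k, by rw [Walk.take_length, min_eq_left (hk d).le], rfl⟩
  · refine Set.disjoint_left.2 fun z hz hz' => hfst (hι ?_)
    rw [Walk.mem_verts_toSubgraph] at hz hz'
    have hzι : z ∈ Set.range ι := hinter d.adj d'.adj hedge z (hmem hz) (hmem hz')
    exact (hsource hz hzι).symm.trans (hsource hz' hzι)

theorem card_le_lambdaK_of_darts [Finite V'] (hsub : D.IsSubdivision D' ι f)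
    (hf : ∀ e ∈ D.edgeSet, k ≤ f e) {α : Type*} {d : α → D.Dart}
    (hfst : Function.Injective fun i => (d i).fst)
    (hedge : Function.Injective fun i => (d i).edge) :
    Nat.card α ≤ D'.lambdaK k := by
  obtain ⟨H, hpath, hdisj⟩ := exists_disjoint_kEdgePaths_of_darts hsub hf
  exact card_le_lambdaK (fun i => hpath (d i))
    fun i j hij => hdisj (d i) (d j) (hfst.ne hij) (hedge.ne hij)

theorem stmt_19_general [Finite V] [Finite V'] (hconn : D.Connected)
    (hedges : Nat.card V ≤ D.edgeSet.ncard) (hsub : D.IsSubdivision D' ι f)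
    (hf : ∀ e ∈ D.edgeSet, k ≤ f e) :
    Nat.card V ≤ D'.lambdaK k := by
  obtain ⟨next, hadj, hinj⟩ := exists_injective_incident_edge hconn hedges
  exact card_le_lambdaK_of_darts hsub hf (d := fun v => ⟨(v, next v), hadj v⟩)
    Function.injective_id hinj

end Subdivision

/-- Let `k ≥ 1` and let `D` be a finite simple connected graph whose number of
edges equals its number of vertices.  Let `D_k` be obtained from `D` by
subdividing every edge with exactly `k` new vertices.  Then `λ_k(D_k) ≥ v(D)`. -/
theorem stmt_19 {V V' : Type} [Fintype V] [Fintype V'] (k : ℕ) (hk : 1 ≤ k)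
    (D : SimpleGraph V) (hconn : D.Connected)
    (hedges : D.edgeSet.ncard = Fintype.card V)
    (Dk : SimpleGraph V') (ι : V → V')
    (hsub : D.IsSubdivision Dk ι (fun _ => k)) :
    Fintype.card V ≤ Dk.lambdaK k := by
  rw [← Nat.card_eq_fintype_card] at hedges ⊢
  exact stmt_19_general hconn hedges.ge hsub fun _ _ => le_rfl
end
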